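/- For integers p ≥ 0, k ≥ 0 with q > 0, m > 0, n = 0, the integral W^{p,k}_{q,m,0} = ∫_{S²} Y_{p,q} Y_{k,m} Y_{k,0} dS equals δ_{q,m} C_{p,k} (−1)^q (p k k; 0 0 0)(p k k; m −m 0), with C_{p,k} = (2k+1)√(2p+1)/√(4π). -/

import Mathlib

open scoped Real

noncomputable section

/-- Factorial extended to integers: zero for negative arguments. -/
def fact' (z : ℤ) : ℝ := if z < 0 then 0 else (Nat.factorial z.toNat : ℝ)

/-- The Wigner 3-j symbol, defined via the Racah formula. -/
def w3j (l1 l2 l3 : ℕ) (m1 m2 m3 : ℤ) : ℝ :=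
  if m1 + m2 + m3 = 0 ∧ |m1| ≤ (l1 : ℤ) ∧ |m2| ≤ (l2 : ℤ) ∧ |m3| ≤ (l3 : ℤ) ∧
      (l3 : ℤ) ≤ (l1 : ℤ) + (l2 : ℤ) ∧ |(l1 : ℤ) - (l2 : ℤ)| ≤ (l3 : ℤ) then
    (-1 : ℝ) ^ ((l1 : ℤ) - (l2 : ℤ) - m3) *
      Real.sqrt ((fact' ((l1 : ℤ) + l2 - l3) * fact' ((l1 : ℤ) - l2 + l3) *
          fact' (-(l1 : ℤ) + l2 + l3) * fact' ((l1 : ℤ) - m1) * fact' ((l1 : ℤ) + m1) *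
          fact' ((l2 : ℤ) - m2) * fact' ((l2 : ℤ) + m2) * fact' ((l3 : ℤ) - m3) *
          fact' ((l3 : ℤ) + m3)) / fact' ((l1 : ℤ) + l2 + l3 + 1)) *
      ∑ t ∈ Finset.range (l1 + l2 + l3 + 1),
        (-1 : ℝ) ^ t /
          (fact' t * fact' ((l3 : ℤ) - l2 + m1 + t) * fact' ((l3 : ℤ) - l1 - m2 + t) *
            fact' ((l1 : ℤ) + l2 - l3 - t) * fact' ((l1 : ℤ) - m1 - t) *
            fact' ((l2 : ℤ) + m2 - t))
  else 0

/-- Associated Legendre function via the Rodrigues formula. -/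
def assocLegendre (l : ℕ) (m : ℤ) (x : ℝ) : ℝ :=
  ((-1 : ℝ) ^ m / ((2 : ℝ) ^ l * (Nat.factorial l : ℝ))) * (1 - x ^ 2) ^ ((m : ℝ) / 2) *
    iteratedDeriv (m + l).toNat (fun y : ℝ => (y ^ 2 - 1) ^ l) x

/-- Complex spherical harmonic of degree `l` and order `m`. -/
def Ysph (l : ℕ) (m : ℤ) (θ φ : ℝ) : ℂ :=
  ((Real.sqrt ((2 * l + 1) / (4 * Real.pi) * (fact' ((l : ℤ) - m) / fact' ((l : ℤ) + m))) *
      assocLegendre l m (Real.cos θ) : ℝ) : ℂ) * Complex.exp (Complex.I * m * φ)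

/-- Real spherical harmonic of degree `l` and order `m`. -/
def Yre (l : ℕ) (m : ℤ) (θ φ : ℝ) : ℝ :=
  if m < 0 then
    (Complex.I / (Real.sqrt 2 : ℂ) * (Ysph l m θ φ - (-1 : ℂ) ^ m * Ysph l (-m) θ φ)).re
  else if m = 0 then (Ysph l 0 θ φ).re
  else ((1 / (Real.sqrt 2 : ℂ)) * (Ysph l (-m) θ φ + (-1 : ℂ) ^ m * Ysph l m θ φ)).re

/-- Integral over the unit sphere in spherical coordinates, `dS = sin θ dφ dθ`. -/
def sphInt (f : ℝ → ℝ → ℝ) : ℝ :=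
  ∫ θ in (0 : ℝ)..Real.pi, ∫ φ in (0 : ℝ)..(2 * Real.pi), f θ φ * Real.sin θ

end

/-- Reciprocal factorial on the integers, zero at negative arguments. -/
noncomputable def rfact (z : ℤ) : ℝ := (fact' z)⁻¹

theorem fact'_natCast (n : ℕ) : fact' n = n.factorial := by
  simp [fact']

theorem rfact_natCast (n : ℕ) : rfact n = (n.factorial : ℝ)⁻¹ := by
  rw [rfact, fact'_natCast]

theorem rfact_of_neg {z : ℤ} (hz : z < 0) : rfact z = 0 := by
  simp [rfact, fact', hz]

theorem rfact_zero : rfact 0 = 1 := by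
  simp [rfact, fact']

theorem rfact_sub_one (z : ℤ) : rfact (z - 1) = z * rfact z := by
  rcases lt_trichotomy z 0 with hz | rfl | hz
  · rw [rfact_of_neg hz, rfact_of_neg (by omega), mul_zero]
  · rw [rfact_of_neg (by omega)]; simp
  · obtain ⟨n, rfl⟩ : ∃ n : ℕ, z = n + 1 := ⟨(z - 1).toNat, by omega⟩
    have h : ((n : ℤ) + 1) = ((n + 1 : ℕ) : ℤ) := by push_cast; rfl
    rw [add_sub_cancel_right, h, rfact_natCast, rfact_natCast, Nat.factorial_succ]
    have := n.factorial_ne_zero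
    push_cast
    field_simp

theorem rfact_eq (z : ℤ) : rfact z = (z + 1) * rfact (z + 1) := by
  have := rfact_sub_one (z + 1)
  rw [add_sub_cancel_right] at this
  rw [this]; push_cast; rfl

theorem rfact_mul_rfact_of_add_neg {y z : ℤ} (h : y + z < 0) : rfact y * rfact z = 0 := by
  rcases lt_or_ge y 0 with hy | hy
  · rw [rfact_of_neg hy, zero_mul]
  · rw [rfact_of_neg (z := z) (by omega), mul_zero]

/-- The summand of Racah's formula for the 3-j symbol. -/
noncomputable def racahTerm (l1 l2 l3 : ℕ) (m1 m2 : ℤ) (t : ℕ) : ℝ :=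
  (-1) ^ t * (rfact t * rfact ((l3 : ℤ) - l2 + m1 + t) * rfact ((l3 : ℤ) - l1 - m2 + t) *
    rfact ((l1 : ℤ) + l2 - l3 - t) * rfact ((l1 : ℤ) - m1 - t) * rfact ((l2 : ℤ) + m2 - t))

/-- The alternating sum in Racah's formula for the 3-j symbol. -/
noncomputable def racahSum (l1 l2 l3 : ℕ) (m1 m2 : ℤ) : ℝ :=
  ∑ t ∈ Finset.range (l1 + l2 + l3 + 1), racahTerm l1 l2 l3 m1 m2 t

theorem racahSum_lowering (l1 l2 l3 : ℕ) (m1 m2 : ℤ) :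
    ((l1 : ℝ) - m1 + 1) * racahSum l1 l2 l3 (m1 - 1) m2 +
      ((l2 : ℝ) - m2 + 1) * racahSum l1 l2 l3 m1 (m2 - 1) -
      ((l3 : ℝ) + m1 + m2) * racahSum l1 l2 l3 m1 m2 = 0 := by
  let A : ℕ → ℝ := fun t => (-1) ^ t * (rfact ((t : ℤ) - 1) *
    rfact ((l3 : ℤ) - l2 + m1 + t - 1) * rfact ((l3 : ℤ) - l1 - m2 + t) *
    rfact ((l1 : ℤ) + l2 - l3 - t) * rfact ((l1 : ℤ) - m1 - t + 1) * rfact ((l2 : ℤ) + m2 - t))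
  have key : ∀ t : ℕ, ((l1 : ℝ) - m1 + 1) * racahTerm l1 l2 l3 (m1 - 1) m2 t +
      ((l2 : ℝ) - m2 + 1) * racahTerm l1 l2 l3 m1 (m2 - 1) t -
      ((l3 : ℝ) + m1 + m2) * racahTerm l1 l2 l3 m1 m2 t = A t - A (t + 1) := by
    intro t
    simp only [A, racahTerm]
    have e1 : (l3 : ℤ) - l2 + (m1 - 1) + t = (l3 : ℤ) - l2 + m1 + t - 1 := by ring
    have e2 : (l1 : ℤ) - (m1 - 1) - t = (l1 : ℤ) - m1 - t + 1 := by ring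
    have e3 : (l3 : ℤ) - l1 - (m2 - 1) + t = (l3 : ℤ) - l1 - m2 + t + 1 := by ring
    have e4 : (l2 : ℤ) + (m2 - 1) - t = (l2 : ℤ) + m2 - t - 1 := by ring
    have e5 : ((t + 1 : ℕ) : ℤ) - 1 = t := by push_cast; ring
    have e6 : (l3 : ℤ) - l2 + m1 + ((t + 1 : ℕ) : ℤ) - 1 = (l3 : ℤ) - l2 + m1 + t := by
      push_cast; ring
    have e7 : (l3 : ℤ) - l1 - m2 + ((t + 1 : ℕ) : ℤ) = (l3 : ℤ) - l1 - m2 + t + 1 := by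
      push_cast; ring
    have e8 : (l1 : ℤ) + l2 - l3 - ((t + 1 : ℕ) : ℤ) = (l1 : ℤ) + l2 - l3 - t - 1 := by
      push_cast; ring
    have e9 : (l1 : ℤ) - m1 - ((t + 1 : ℕ) : ℤ) + 1 = (l1 : ℤ) - m1 - t := by
      push_cast; ring
    have e10 : (l2 : ℤ) + m2 - ((t + 1 : ℕ) : ℤ) = (l2 : ℤ) + m2 - t - 1 := by
      push_cast; ring
    rw [e1, e2, e3, e4, e5, e6, e7, e8, e9, e10]
    simp only [rfact_sub_one]
    rw [rfact_eq ((l3 : ℤ) - l1 - m2 + t), rfact_eq ((l1 : ℤ) - m1 - t)]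
    push_cast
    ring
  have h0 : A 0 = 0 := by
    simp only [A]
    rw [rfact_of_neg (z := ((0 : ℕ) : ℤ) - 1) (by simp)]
    ring
  have hN : A (l1 + l2 + l3 + 1) = 0 := by
    simp only [A]
    rw [rfact_of_neg (z := (l1 : ℤ) + l2 - l3 - ((l1 + l2 + l3 + 1 : ℕ) : ℤ))
      (by push_cast; omega)]
    ring
  unfold racahSum
  rw [Finset.mul_sum, Finset.mul_sum, Finset.mul_sum, ← Finset.sum_add_distrib,
    ← Finset.sum_sub_distrib, Finset.sum_congr rfl fun t _ => key t, Finset.sum_range_sub', h0, hN,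
    sub_zero]

theorem racahSum_eq_zero_of_lt_neg_right (l1 l2 l3 : ℕ) (m1 : ℤ) {m2 : ℤ} (h : m2 < -l2) :
    racahSum l1 l2 l3 m1 m2 = 0 :=
  Finset.sum_eq_zero fun t _ => by
    rw [racahTerm, rfact_of_neg (z := (l2 : ℤ) + m2 - t) (by omega)]
    ring

theorem racahSum_eq_zero_of_lt_add (l1 l2 l3 : ℕ) {m1 m2 : ℤ} (h : (l3 : ℤ) < m1 + m2) :
    racahSum l1 l2 l3 m1 m2 = 0 :=
  Finset.sum_eq_zero fun t _ => by
    have := rfact_mul_rfact_of_add_neg (y := (l3 : ℤ) - l1 - m2 + t) (z := (l1 : ℤ) - m1 - t)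
      (by omega)
    rw [racahTerm]
    linear_combination (-1) ^ t * rfact t * rfact ((l3 : ℤ) - l2 + m1 + t) *
      rfact ((l1 : ℤ) + l2 - l3 - t) * rfact ((l2 : ℤ) + m2 - t) * this

theorem racahSum_top (l1 l2 l3 : ℕ) (m2 : ℤ) :
    racahSum l1 l2 l3 l1 m2 = rfact ((l3 : ℤ) - l2 + l1) * rfact ((l3 : ℤ) - l1 - m2) *
      rfact ((l1 : ℤ) + l2 - l3) * rfact ((l2 : ℤ) + m2) := by
  rw [racahSum, Finset.sum_range_succ', Finset.sum_eq_zero]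
  · simp [racahTerm, rfact_zero]
  · intro t _
    rw [racahTerm, rfact_of_neg (z := (l1 : ℤ) - l1 - ((t + 1 : ℕ) : ℤ)) (by push_cast; omega)]
    ring

theorem racahSum_zero_zero_of_odd {p : ℕ} (hp : Odd p) (k : ℕ) :
    racahSum p k k 0 0 = 0 := by
  have hsub : racahSum p k k 0 0 = ∑ t ∈ Finset.range (p + 1), racahTerm p k k 0 0 t := by
    refine (Finset.sum_subset (Finset.range_subset_range.2 (by omega)) fun t _ ht => ?_).symm
    rw [Finset.mem_range] at ht
    rw [racahTerm, rfact_of_neg (z := (p : ℤ) - 0 - t) (by omega)]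
    ring
  have hanti : racahSum p k k 0 0 = -racahSum p k k 0 0 := by
    conv_lhs => rw [hsub, ← Finset.sum_range_reflect]
    rw [hsub, ← Finset.sum_neg_distrib]
    refine Finset.sum_congr rfl fun t ht => ?_
    obtain ⟨u, rfl⟩ : ∃ u, p = t + u := ⟨p - t, by rw [Finset.mem_range] at ht; omega⟩
    have hu : t + u + 1 - 1 - t = u := by omega
    have hs : (-1 : ℝ) ^ u = -(-1) ^ t := by
      have h1 := hp.neg_one_pow (α := ℝ)
      rw [pow_add] at h1
      rcases neg_one_pow_eq_or ℝ t with h | h <;> rw [h] at h1 ⊢ <;> linarith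
    rw [hu, racahTerm, racahTerm, hs]
    have e1 : (k : ℤ) - k + 0 + u = u := by ring
    have e2 : (k : ℤ) - (t + u : ℕ) - 0 + u = k - t := by push_cast; ring
    have e3 : ((t + u : ℕ) : ℤ) + k - k - u = t := by push_cast; ring
    have e4 : ((t + u : ℕ) : ℤ) - 0 - u = t := by push_cast; ring
    have f1 : (k : ℤ) - k + 0 + t = t := by ring
    have f2 : (k : ℤ) - (t + u : ℕ) - 0 + t = k - u := by push_cast; ring
    have f3 : ((t + u : ℕ) : ℤ) + k - k - t = u := by push_cast; ring
    have f4 : ((t + u : ℕ) : ℤ) - 0 - t = u := by push_cast; ring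
    rw [e1, e2, e3, e4, f1, f2, f3, f4, add_zero]
    ring
  linarith

/-- A case of Dixon's identity. -/
theorem racahSum_two_mul_zero_zero (s i : ℕ) :
    racahSum (2 * s) (s + i) (s + i) 0 0 = (-1) ^ s * (2 * s + i).factorial /
      ((s.factorial : ℝ) ^ 2 * i.factorial * (2 * s).factorial * ((s + i).factorial : ℝ) ^ 2) := by
  let F : ℕ → ℕ → ℝ := fun i t => (-1) ^ t * (rfact t ^ 2 * rfact (2 * s - t : ℤ) ^ 2 *
    rfact (s + i - t : ℤ) * rfact (i - s + t : ℤ))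
  have hsub : racahSum (2 * s) (s + i) (s + i) 0 0 = ∑ t ∈ Finset.range (2 * s + 1), F i t := by
    symm
    rw [racahSum]
    refine Finset.sum_subset_zero_on_sdiff (Finset.range_subset_range.2 (by omega)) ?_ ?_
    · intro t ht
      rw [Finset.mem_sdiff, Finset.mem_range, Finset.mem_range] at ht
      rw [racahTerm, rfact_of_neg (z := ((2 * s : ℕ) : ℤ) - 0 - t) (by push_cast; omega)]
      ring
    · intro t _
      simp only [F, racahTerm]
      push_cast
      have e1 : (s + i : ℤ) - (s + i) + 0 + t = t := by ring
      have e2 : (s + i : ℤ) - 2 * s - 0 + t = i - s + t := by ring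
      have e3 : 2 * (s : ℤ) + (s + i) - (s + i) - t = 2 * s - t := by ring
      rw [e1, e2, e3, sub_zero, add_zero]
      ring
  rw [hsub]
  clear hsub
  induction i with
  | zero =>
    rw [Finset.sum_eq_single s]
    · simp only [F]
      have e1 : (2 * s - s : ℤ) = s := by ring
      have e2 : (s + (0 : ℕ) - s : ℤ) = 0 := by push_cast; ring
      have e3 : ((0 : ℕ) - s + s : ℤ) = 0 := by push_cast; ring
      rw [e1, e2, e3, rfact_natCast, rfact_zero]
      have := s.factorial_ne_zero
      have := (2 * s).factorial_ne_zero
      simp only [add_zero, Nat.factorial_zero]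
      push_cast
      field_simp
    · intro t _ hts
      simp only [F]
      rcases lt_or_gt_of_ne hts with h | h
      · rw [rfact_of_neg (z := ((0 : ℕ) - s + t : ℤ)) (by push_cast; omega)]; ring
      · rw [rfact_of_neg (z := (s + (0 : ℕ) - t : ℤ)) (by push_cast; omega)]; ring
    · intro h
      exact absurd (Finset.mem_range.2 (by omega)) h
  | succ i ih =>
    let A : ℕ → ℝ := fun t => (-1) ^ t / 2 * (rfact (t - 1 : ℤ) ^ 2 * rfact (2 * s - t : ℤ) ^ 2 *
      rfact (s + i + 1 - t : ℤ) * rfact (i - s + t : ℤ))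
    have key : ∀ t, ((i : ℝ) + 1) * (s + i + 1) ^ 2 * F (i + 1) t - (2 * s + i + 1) * F i t =
        A t - A (t + 1) := by
      intro t
      simp only [F, A]
      push_cast
      have e1 : (t + 1 - 1 : ℤ) = t := by ring
      have e2 : (2 * s - (t + 1) : ℤ) = 2 * s - t - 1 := by ring
      have e3 : (s + i + 1 - (t + 1) : ℤ) = s + i + 1 - t - 1 := by ring
      have e4 : (i - s + (t + 1) : ℤ) = i - s + t + 1 := by ring
      have e5 : (s + (i + 1) - t : ℤ) = s + i + 1 - t := by ring
      have e6 : (i + 1 - s + t : ℤ) = i - s + t + 1 := by ring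
      have e7 : (s + i - t : ℤ) = s + i + 1 - t - 1 := by ring
      rw [e1, e2, e3, e4, e5, e6, e7, rfact_eq (i - s + t : ℤ)]
      simp only [rfact_sub_one]
      push_cast
      ring
    have h0 : A 0 = 0 := by
      simp only [A]
      rw [rfact_of_neg (z := ((0 : ℕ) : ℤ) - 1) (by simp)]
      ring
    have hN : A (2 * s + 1) = 0 := by
      simp only [A]
      rw [rfact_of_neg (z := (2 * s - (2 * s + 1 : ℕ) : ℤ)) (by push_cast; omega)]
      ring
    have hrec := Finset.sum_range_sub' A (2 * s + 1)
    rw [← Finset.sum_congr rfl fun t _ => key t, h0, hN, Finset.sum_sub_distrib, ← Finset.mul_sum,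
      ← Finset.mul_sum, ih, sub_zero] at hrec
    have hpos : ((i : ℝ) + 1) * (s + i + 1) ^ 2 ≠ 0 := by positivity
    apply mul_left_cancel₀ hpos
    rw [sub_eq_zero.1 hrec, ← add_assoc, ← add_assoc, Nat.factorial_succ (2 * s + i),
      Nat.factorial_succ i, Nat.factorial_succ (s + i)]
    have := s.factorial_ne_zero
    have := (2 * s).factorial_ne_zero
    have := i.factorial_ne_zero
    have := (s + i).factorial_ne_zero
    push_cast
    field_simp

section Polynomial

open Polynomial

/-- The polynomial `X ^ 2 - 1`. -/
noncomputable def sqSubOne : ℝ[X] := X ^ 2 - 1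

/-- The `n`-th derivative of `(X ^ 2 - 1) ^ l`; for `n = l + m` it is, up to a scalar,
`(1 - X ^ 2) ^ (-m / 2)` times the associated Legendre function of degree `l` and order `m`. -/
noncomputable def rodrigues (l n : ℕ) : ℝ[X] := derivative^[n] (sqSubOne ^ l)

/-- Integration of a real polynomial over `[-1, 1]`. -/
noncomputable def polyInt (f : ℝ[X]) : ℝ := ∫ x in (-1 : ℝ)..1, f.eval x

theorem polyInt_add (f g : ℝ[X]) : polyInt (f + g) = polyInt f + polyInt g := by
  simp only [polyInt, eval_add]
  exact intervalIntegral.integral_add (f.continuous.intervalIntegrable _ _)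
    (g.continuous.intervalIntegrable _ _)

theorem polyInt_C_mul (a : ℝ) (f : ℝ[X]) : polyInt (C a * f) = a * polyInt f := by
  simp [polyInt]

theorem polyInt_zero : polyInt 0 = 0 := by
  simp [polyInt]

theorem polyInt_derivative (f : ℝ[X]) : polyInt (derivative f) = f.eval 1 - f.eval (-1) :=
  intervalIntegral.integral_eq_sub_of_hasDerivAt (fun x _ => f.hasDerivAt x)
    ((derivative f).continuous.intervalIntegrable _ _)

theorem derivative_sqSubOne : derivative sqSubOne = 2 * X := by
  rw [sqSubOne, derivative_sub, derivative_X_pow, derivative_one, Nat.cast_ofNat, C_ofNat]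
  simp

theorem rodrigues_zero (l : ℕ) : rodrigues l 0 = sqSubOne ^ l := rfl

theorem rodrigues_succ (l n : ℕ) : rodrigues l (n + 1) = derivative (rodrigues l n) :=
  Function.iterate_succ_apply' _ _ _

theorem derivative_sqSubOne_pow (l : ℕ) :
    derivative (sqSubOne ^ l) = C (2 * l : ℝ) * X * sqSubOne ^ (l - 1) := by
  rw [derivative_pow, derivative_sqSubOne, C_mul, C_ofNat]
  ring

theorem rodrigues_one_ode (l : ℕ) :
    sqSubOne * rodrigues l 1 = C (2 * l : ℝ) * X * rodrigues l 0 := by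
  rw [rodrigues_succ, rodrigues_zero, derivative_sqSubOne_pow]
  rcases l with _ | l
  · simp
  · rw [Nat.add_sub_cancel]; ring

theorem rodrigues_ode (l n : ℕ) :
    sqSubOne * rodrigues l (n + 2) + C (2 * (n + 1 - l) : ℝ) * X * rodrigues l (n + 1) =
      C ((n + 1) * (2 * l - n) : ℝ) * rodrigues l n := by
  induction n with
  | zero =>
    have h := congrArg derivative (rodrigues_one_ode l)
    simp only [derivative_mul, derivative_sqSubOne, ← rodrigues_succ, derivative_C,
      derivative_X] at h
    simp only [C_mul, C_sub, C_add, C_ofNat, Nat.cast_zero, C_0, C_1] at h ⊢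
    linear_combination h
  | succ n ih =>
    have h := congrArg derivative ih
    simp only [derivative_mul, derivative_add, derivative_sqSubOne, ← rodrigues_succ, derivative_C,
      derivative_X] at h
    simp only [C_mul, C_sub, C_add, C_ofNat, Nat.cast_add, Nat.cast_one, C_1] at h ⊢
    linear_combination h

theorem rodrigues_ode' (l n : ℕ) :
    C (n * (2 * l + 1 - n) : ℝ) * rodrigues l (n - 1) =
      sqSubOne * rodrigues l (n + 1) + C (2 * (n - l) : ℝ) * X * rodrigues l n := by
  rcases n with _ | n
  · have h := rodrigues_one_ode l
    simp only [C_mul, C_sub, C_ofNat, Nat.cast_zero, C_0] at h ⊢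
    linear_combination -h
  · rw [Nat.add_sub_cancel, add_assoc n 1 1, one_add_one_eq_two]
    have h := rodrigues_ode l n
    push_cast at h ⊢
    rw [h]
    congr 2
    ring

/-- The relation between the associated Legendre functions of orders `m` and `-m`. -/
theorem rodrigues_reflect {l m : ℕ} (hm : m ≤ l) :
    C ((l + m).factorial : ℝ) * rodrigues l (l - m) =
      C ((l - m).factorial : ℝ) * (sqSubOne ^ m * rodrigues l (l + m)) := by
  induction m using Nat.twoStepInduction with
  | zero => simp
  | one =>
    obtain ⟨l, rfl⟩ : ∃ j, l = j + 1 := ⟨l - 1, by omega⟩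
    have h := rodrigues_ode (l + 1) l
    rw [Nat.add_sub_cancel, pow_one, Nat.factorial_succ (l + 1), Nat.factorial_succ l]
    push_cast at h ⊢
    simp only [C_mul, C_add, C_sub, C_ofNat, C_1] at h ⊢
    linear_combination -C (l.factorial : ℝ) * h
  | more m ih0 ih1 =>
    obtain ⟨j, rfl⟩ : ∃ j, l = m + 2 + j := ⟨l - (m + 2), by omega⟩
    replace ih0 := ih0 (by omega)
    replace ih1 := ih1 (by omega)
    have e0 : m + 2 + j - m = j + 2 := by omega
    have e1 : m + 2 + j - (m + 1) = j + 1 := by omega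
    have e2 : m + 2 + j - (m + 2) = j := by omega
    have e3 : m + 2 + j + m = 2 * m + j + 2 := by omega
    have e4 : m + 2 + j + (m + 1) = 2 * m + j + 2 + 1 := by omega
    have e5 : m + 2 + j + (m + 2) = 2 * m + j + 2 + 2 := by omega
    rw [e2, e5]
    rw [e0, e3] at ih0
    rw [e1, e4] at ih1
    have h1 := rodrigues_ode (m + 2 + j) j
    have h2 := rodrigues_ode (m + 2 + j) (2 * m + j + 2)
    have hne : (C ((j : ℝ) + 1) : ℝ[X]) ≠ 0 := by
      rw [Ne, C_eq_zero]; positivity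
    apply mul_left_cancel₀ hne
    rw [Nat.factorial_succ j.succ, Nat.factorial_succ j] at ih0
    rw [Nat.factorial_succ (2 * m + j + 2), Nat.factorial_succ j] at ih1
    rw [Nat.factorial_succ (2 * m + j + 2 + 1), Nat.factorial_succ (2 * m + j + 2)]
    push_cast at *
    simp only [C_mul, C_add, C_sub, C_ofNat, C_1] at *
    linear_combination
      -(2 * C (m : ℝ) + C (j : ℝ) + 3) * C ((2 * m + j + 2).factorial : ℝ) * h1 +
      (2 * C (m : ℝ) + C (j : ℝ) + 3) * sqSubOne * ih0 - 2 * (C (m : ℝ) + 1) * X * ih1 -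
      (C (j : ℝ) + 1) * C (j.factorial : ℝ) * sqSubOne ^ (m + 1) * h2

theorem eval_rodrigues_of_lt {l n : ℕ} (h : n < l) {x : ℝ} (hx : sqSubOne.eval x = 0) :
    (rodrigues l n).eval x = 0 := by
  obtain ⟨f, hf⟩ := pow_sub_dvd_iterate_derivative_pow sqSubOne l n
  rw [rodrigues, hf, eval_mul, eval_pow, hx, zero_pow (by omega), zero_mul]

theorem eval_sqSubOne_one : sqSubOne.eval 1 = 0 := by simp [sqSubOne]

theorem eval_sqSubOne_neg_one : sqSubOne.eval (-1) = 0 := by simp [sqSubOne]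

theorem rodrigues_eq_zero_of_lt {l n : ℕ} (h : 2 * l < n) : rodrigues l n = 0 := by
  refine iterate_derivative_eq_zero (lt_of_le_of_lt natDegree_pow_le ?_)
  have : sqSubOne.natDegree = 2 := by
    rw [sqSubOne, ← C_1, natDegree_sub_C, natDegree_X_pow]
  rw [this]
  omega

theorem rodrigues_add_two (l n : ℕ) :
    rodrigues l (n + 2) = C (2 * l * (2 * l - 1) : ℝ) * rodrigues (l - 1) n +
      C (4 * l * (l - 1) : ℝ) * rodrigues (l - 2) n := by
  have h : derivative^[2] (sqSubOne ^ l) = C (2 * l * (2 * l - 1) : ℝ) * sqSubOne ^ (l - 1) +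
      C (4 * l * (l - 1) : ℝ) * sqSubOne ^ (l - 2) := by
    rw [Function.iterate_succ_apply, Function.iterate_one, derivative_sqSubOne_pow, derivative_mul,
      derivative_C_mul, derivative_X, derivative_sqSubOne_pow]
    rcases l with _ | _ | l
    · simp
    · simp only [C_mul, C_sub, C_ofNat, C_1, Nat.cast_one, Nat.cast_zero, C_0, zero_add,
        Nat.sub_self, pow_zero]
      ring
    · have e1 : l + 1 + 1 - 1 = l + 1 := by omega
      have e2 : l + 1 + 1 - 2 = l := by omega
      rw [e1, e2, Nat.add_sub_cancel]
      simp only [C_mul, C_sub, C_add, C_ofNat, C_1, Nat.cast_add, Nat.cast_one, pow_succ]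
      simp only [sqSubOne]
      ring
  rw [rodrigues, Function.iterate_add_apply, h, iterate_map_add, iterate_derivative_C_mul,
    iterate_derivative_C_mul]
  rfl

theorem rodrigues_two_mul (l : ℕ) : rodrigues l (2 * l) = C ((2 * l).factorial : ℝ) := by
  induction l with
  | zero => simp [rodrigues_zero]
  | succ l ih =>
    have h0 : C (4 * (l + 1 : ℕ) * ((l + 1 : ℕ) - 1) : ℝ) * rodrigues (l + 1 - 2) (2 * l) = 0 := by
      rcases l with _ | l
      · simp
      · rw [rodrigues_eq_zero_of_lt (l := l + 1 + 1 - 2) (by omega), mul_zero]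
    rw [mul_add, mul_one, rodrigues_add_two, h0, add_zero, Nat.add_sub_cancel, ih, ← C_mul,
      Nat.factorial_succ, Nat.factorial_succ]
    congr 1
    push_cast
    ring

/-- Integral over `[-1, 1]` of a product of three associated Legendre functions whose orders
`n₁ - l₁`, `n₂ - l₂`, `n₃ - l₃` sum to zero, up to a scalar. -/
noncomputable def tripleInt (l1 l2 l3 n1 n2 n3 : ℕ) : ℝ :=
  polyInt (rodrigues l1 n1 * rodrigues l2 n2 * rodrigues l3 n3)

theorem tripleInt_lowering {l1 l2 l3 n1 n2 n3 : ℕ} (h : n1 + n2 + n3 = l1 + l2 + l3 + 1) :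
    n1 * (2 * l1 + 1 - n1 : ℝ) * tripleInt l1 l2 l3 (n1 - 1) n2 n3 +
      n2 * (2 * l2 + 1 - n2 : ℝ) * tripleInt l1 l2 l3 n1 (n2 - 1) n3 +
      n3 * (2 * l3 + 1 - n3 : ℝ) * tripleInt l1 l2 l3 n1 n2 (n3 - 1) = 0 := by
  have hd := polyInt_derivative
    (sqSubOne * (rodrigues l1 n1 * rodrigues l2 n2 * rodrigues l3 n3))
  rw [eval_mul, eval_sqSubOne_one, zero_mul, eval_mul, eval_sqSubOne_neg_one, zero_mul,
    sub_zero] at hd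
  rw [tripleInt, tripleInt, tripleInt, ← polyInt_C_mul, ← polyInt_C_mul, ← polyInt_C_mul,
    ← polyInt_add, ← polyInt_add, ← hd]
  congr 1
  simp only [derivative_mul, derivative_sqSubOne, ← rodrigues_succ]
  have hC : (C (n1 : ℝ) + C (n2 : ℝ) + C (n3 : ℝ) : ℝ[X]) =
      C (l1 : ℝ) + C (l2 : ℝ) + C (l3 : ℝ) + 1 := by
    rw [← C_1, ← C_add, ← C_add, ← C_add, ← C_add, ← C_add]
    exact congrArg C (by exact_mod_cast h)
  have h1 := rodrigues_ode' l1 n1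
  have h2 := rodrigues_ode' l2 n2
  have h3 := rodrigues_ode' l3 n3
  simp only [C_mul, C_add, C_sub, C_ofNat, C_1] at *
  linear_combination rodrigues l2 n2 * rodrigues l3 n3 * h1 +
    rodrigues l1 n1 * rodrigues l3 n3 * h2 + rodrigues l1 n1 * rodrigues l2 n2 * h3 +
    2 * X * rodrigues l1 n1 * rodrigues l2 n2 * rodrigues l3 n3 * hC

/-- A solution of the lowering relations is determined by its values at the top order in the
first argument. -/
theorem eq_zero_of_lowering {l1 l2 l3 : ℕ} {E : ℕ → ℕ → ℕ → ℝ}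
    (hE : ∀ n1 n2 n3 : ℕ, n1 + 1 + n2 + n3 = l1 + l2 + l3 + 1 →
      ((n1 + 1 : ℕ) : ℝ) * (2 * l1 - n1) * E n1 n2 n3 +
        n2 * (2 * l2 + 1 - n2) * E (n1 + 1) (n2 - 1) n3 +
        n3 * (2 * l3 + 1 - n3) * E (n1 + 1) n2 (n3 - 1) = 0)
    (htop : ∀ n2 n3 : ℕ, 2 * l1 + n2 + n3 = l1 + l2 + l3 → E (2 * l1) n2 n3 = 0)
    {n1 n2 n3 : ℕ} (hn1 : n1 ≤ 2 * l1) (hn : n1 + n2 + n3 = l1 + l2 + l3) : E n1 n2 n3 = 0 := by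
  induction hn1 using Nat.decreasingInduction generalizing n2 n3 with
  | self => exact htop n2 n3 hn
  | of_succ n1 hlt ih =>
    have h := hE n1 n2 n3 (by omega)
    have h2 : n2 * (2 * l2 + 1 - n2) * E (n1 + 1) (n2 - 1) n3 = 0 := by
      rcases n2 with _ | n2
      · simp
      · rw [ih (by omega), mul_zero]
    have h3 : n3 * (2 * l3 + 1 - n3) * E (n1 + 1) n2 (n3 - 1) = 0 := by
      rcases n3 with _ | n3
      · simp
      · rw [ih (by omega), mul_zero]
    rw [h2, h3, add_zero, add_zero] at h
    have hlt' : (n1 : ℝ) < 2 * l1 := by exact_mod_cast hlt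
    have hne : ((n1 + 1 : ℕ) : ℝ) * (2 * l1 - n1) ≠ 0 :=
      mul_ne_zero (by positivity) (sub_ne_zero.2 hlt'.ne')
    exact (mul_eq_zero.1 h).resolve_left hne

theorem tripleInt_top {l1 l2 l3 n2 n3 : ℕ} (h : l1 + n2 + n3 = l2 + l3) :
    tripleInt l1 l2 l3 (2 * l1) n2 n3 =
      (2 * l1).factorial * (-1) ^ n2 * polyInt (sqSubOne ^ l2 * rodrigues l3 (n2 + n3)) := by
  have key : polyInt (rodrigues l2 n2 * rodrigues l3 n3) =
      (-1) ^ n2 * polyInt (sqSubOne ^ l2 * rodrigues l3 (n2 + n3)) := by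
    induction n2 generalizing n3 with
    | zero => simp [rodrigues_zero]
    | succ n2 ih =>
      have hd := polyInt_derivative (rodrigues l2 n2 * rodrigues l3 n3)
      have hb : ∀ x : ℝ, sqSubOne.eval x = 0 →
          (rodrigues l2 n2 * rodrigues l3 n3).eval x = 0 := by
        intro x hx
        rw [eval_mul]
        rcases lt_or_ge n2 l2 with h2 | h2
        · rw [eval_rodrigues_of_lt h2 hx, zero_mul]
        · rw [eval_rodrigues_of_lt (l := l3) (n := n3) (by omega) hx, mul_zero]
      rw [hb _ eval_sqSubOne_one, hb _ eval_sqSubOne_neg_one, sub_zero, derivative_mul,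
        ← rodrigues_succ, ← rodrigues_succ, polyInt_add, ih (by omega)] at hd
      rw [eq_neg_of_add_eq_zero_left hd, pow_succ, add_right_comm, add_assoc]
      ring
  rw [tripleInt, rodrigues_two_mul, mul_assoc, polyInt_C_mul, key, mul_assoc]

theorem tripleInt_eq_zero_of_lt {l1 l2 l3 n1 n2 n3 : ℕ} (h : l2 + l3 < l1) (hn1 : n1 ≤ 2 * l1)
    (hn : n1 + n2 + n3 = l1 + l2 + l3) : tripleInt l1 l2 l3 n1 n2 n3 = 0 := by
  refine eq_zero_of_lowering (E := tripleInt l1 l2 l3) (fun n1 n2 n3 h => ?_)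
    (fun n2 n3 h => by omega) hn1 hn
  have := tripleInt_lowering (l1 := l1) (l2 := l2) (l3 := l3) (by omega : n1 + 1 + n2 + n3 = _)
  rw [Nat.add_sub_cancel] at this
  rw [← this]
  push_cast
  ring

/-- The integral is proportional to a 3-j symbol. -/
theorem tripleInt_eq_racahSum {l1 l2 l3 n1 n2 n3 d2 d3 e : ℕ} (hd2 : l1 + l2 = l3 + d2)
    (hd3 : l1 + l3 = l2 + d3) (he : l2 + l3 = l1 + e)
    (hn1 : n1 ≤ 2 * l1) (hn : n1 + n2 + n3 = l1 + l2 + l3) :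
    tripleInt l1 l2 l3 n1 n2 n3 = d2.factorial * d3.factorial * (-1) ^ e *
      polyInt (sqSubOne ^ l2 * rodrigues l3 e) * (n1.factorial * n2.factorial * n3.factorial) *
      (-1) ^ n3 * racahSum l1 l2 l3 (n1 - l1) (n2 - l2) := by
  set c := d2.factorial * d3.factorial * (-1) ^ e * polyInt (sqSubOne ^ l2 * rodrigues l3 e)
  let E : ℕ → ℕ → ℕ → ℝ := fun n1 n2 n3 => tripleInt l1 l2 l3 n1 n2 n3 -
    c * (n1.factorial * n2.factorial * n3.factorial) * (-1) ^ n3 *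
      racahSum l1 l2 l3 (n1 - l1) (n2 - l2)
  refine sub_eq_zero.1 (eq_zero_of_lowering (E := E) (fun n1 n2 n3 h => ?_)
    (fun n2 n3 h => ?_) hn1 hn)
  · have hT := tripleInt_lowering (l1 := l1) (l2 := l2) (l3 := l3) (by omega : n1 + 1 + n2 + n3 = _)
    have hR := racahSum_lowering l1 l2 l3 (n1 + 1 - l1) (n2 - l2)
    have hR2 : n2 = 0 → racahSum l1 l2 l3 (n1 + 1 - l1) (n2 - l2 - 1) = 0 := fun h0 =>
      racahSum_eq_zero_of_lt_neg_right _ _ _ _ (by omega)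
    have hR3 : n3 = 0 → racahSum l1 l2 l3 (n1 + 1 - l1) (n2 - l2) = 0 := fun h0 =>
      racahSum_eq_zero_of_lt_add _ _ _ (by omega)
    have hf2 : (n2 : ℝ) * ((n2 - 1).factorial *
        racahSum l1 l2 l3 (n1 + 1 - l1) ((n2 - 1 : ℕ) - l2)) =
        n2.factorial * racahSum l1 l2 l3 (n1 + 1 - l1) (n2 - l2 - 1) := by
      rcases n2 with _ | n2
      · rw [hR2 rfl]; simp
      · rw [Nat.add_sub_cancel, Nat.factorial_succ]
        have : ((n2 + 1 : ℕ) : ℤ) - l2 - 1 = n2 - l2 := by push_cast; ring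
        rw [this]
        push_cast
        ring
    have hf3 : (n3 : ℝ) * ((n3 - 1).factorial * ((-1) ^ (n3 - 1) *
        racahSum l1 l2 l3 (n1 + 1 - l1) (n2 - l2))) =
        -(n3.factorial * ((-1) ^ n3 * racahSum l1 l2 l3 (n1 + 1 - l1) (n2 - l2))) := by
      rcases n3 with _ | n3
      · rw [hR3 rfl]; simp
      · rw [Nat.add_sub_cancel, Nat.factorial_succ, pow_succ]
        push_cast
        ring
    have hs : (n1 : ℝ) + n2 + n3 = l1 + l2 + l3 := by
      have : n1 + n2 + n3 = l1 + l2 + l3 := by omega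
      exact_mod_cast this
    have e1 : (n1 : ℤ) + 1 - l1 - 1 = n1 - l1 := by ring
    rw [Nat.add_sub_cancel] at hT
    rw [e1] at hR
    simp only [E]
    rw [Nat.factorial_succ]
    push_cast at *
    linear_combination hT - c * (n1 + 1) * n1.factorial * n3.factorial * (-1) ^ n3 *
      (2 * l2 + 1 - n2) * hf2 - c * (n1 + 1) * n1.factorial * n2.factorial *
      (2 * l3 + 1 - n3) * hf3 - c * (n1 + 1) * n1.factorial * n2.factorial * n3.factorial *
      (-1) ^ n3 * hR - c * (n1 + 1) * n1.factorial * n2.factorial * n3.factorial *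
      (-1) ^ n3 * racahSum l1 l2 l3 (n1 + 1 - l1) (n2 - l2) * hs
  · have hT := tripleInt_top (l1 := l1) (l2 := l2) (l3 := l3) (n2 := n2) (n3 := n3) (by omega)
    obtain rfl : e = n2 + n3 := by omega
    have e1 : ((2 * l1 : ℕ) : ℤ) - l1 = l1 := by push_cast; ring
    have e2 : (l3 : ℤ) - l2 + l1 = d3 := by omega
    have e3 : (l3 : ℤ) - l1 - (n2 - l2) = n3 := by omega
    have e4 : (l1 : ℤ) + l2 - l3 = d2 := by omega
    have e5 : (l2 : ℤ) + (n2 - l2) = n2 := by ring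
    simp only [E, c]
    rw [hT, e1, racahSum_top, e2, e3, e4, e5]
    simp only [rfact_natCast]
    have := d2.factorial_ne_zero
    have := d3.factorial_ne_zero
    have := n2.factorial_ne_zero
    have := n3.factorial_ne_zero
    have hs : (-1 : ℝ) ^ (n2 + n3) * (-1) ^ n3 = (-1) ^ n2 := by
      rw [pow_add, mul_assoc, ← pow_add, ← two_mul, pow_mul]
      simp
    rw [← hs]
    field_simp
    ring

theorem polyInt_sqSubOne_pow (n : ℕ) :
    polyInt (sqSubOne ^ n) = (-1) ^ n * 4 ^ (n + 1) * n.factorial * (n + 1).factorial /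
      (2 * n + 2).factorial := by
  induction n with
  | zero => norm_num [polyInt, Nat.factorial]
  | succ n ih =>
    have hd := polyInt_derivative (X * sqSubOne ^ (n + 1))
    have hp : derivative (X * sqSubOne ^ (n + 1)) =
        C (2 * n + 3 : ℝ) * sqSubOne ^ (n + 1) + C (2 * n + 2 : ℝ) * sqSubOne ^ n := by
      rw [derivative_mul, derivative_X, derivative_sqSubOne_pow, Nat.add_sub_cancel]
      simp only [C_mul, C_add, C_ofNat, Nat.cast_add, Nat.cast_one, C_1, pow_succ]
      simp only [sqSubOne]
      ring
    rw [hp, polyInt_add, polyInt_C_mul, polyInt_C_mul, ih, eval_mul, eval_mul, eval_pow, eval_pow,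
      eval_sqSubOne_one, eval_sqSubOne_neg_one, zero_pow (by omega), mul_zero, mul_zero,
      sub_zero] at hd
    have hne : (2 * n + 3 : ℝ) ≠ 0 := by positivity
    apply mul_left_cancel₀ hne
    rw [eq_neg_of_add_eq_zero_left hd, mul_add 2 n 1, mul_one,
      show 2 * n + 2 + 2 = 2 * n + 2 + 1 + 1 from rfl, Nat.factorial_succ (2 * n + 2 + 1),
      Nat.factorial_succ (2 * n + 2), Nat.factorial_succ (n + 1), Nat.factorial_succ n]
    have := n.factorial_ne_zero
    have := (2 * n + 2).factorial_ne_zero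
    push_cast
    field_simp
    ring

theorem polyInt_sqSubOne_pow_mul_rodrigues_add_two (j k n : ℕ) :
    polyInt (sqSubOne ^ j * rodrigues k (n + 2)) =
      2 * k * (2 * k - 1) * polyInt (sqSubOne ^ j * rodrigues (k - 1) n) +
      4 * k * (k - 1) * polyInt (sqSubOne ^ j * rodrigues (k - 2) n) := by
  rw [rodrigues_add_two, ← polyInt_C_mul, ← polyInt_C_mul, ← polyInt_add]
  congr 1
  ring

theorem polyInt_sqSubOne_pow_mul_rodrigues_even (j s i : ℕ) :
    polyInt (sqSubOne ^ j * rodrigues (s + i) (2 * i)) =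
      (-1) ^ (j + s) * (s + i).factorial * j.factorial * (2 * i).factorial * 4 ^ (s + j + 1) *
        (s + j + 1).factorial * (ascPochhammer ℝ s).eval (j - i + 1 : ℝ) /
        (i.factorial * s.factorial * (2 * s + 2 * j + 2).factorial) := by
  induction i generalizing s with
  | zero =>
    rw [mul_zero, rodrigues_zero, add_zero, ← pow_add, polyInt_sqSubOne_pow]
    have h := ascPochhammer_nat_eq_natCast_ascFactorial ℝ (j + 1) s
    have h' := Nat.factorial_mul_ascFactorial j s
    push_cast at h
    have h'' : (j.factorial : ℝ) * (j + 1).ascFactorial s = (j + s).factorial := by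
      exact_mod_cast h'
    rw [Nat.cast_zero, sub_zero, h, ← h'', mul_add, add_comm j s, add_comm (2 * j) (2 * s)]
    have := s.factorial_ne_zero
    field_simp
  | succ i ih =>
    rw [mul_add, mul_one, polyInt_sqSubOne_pow_mul_rodrigues_add_two, ← add_assoc,
      Nat.add_sub_cancel, ih]
    rcases s with _ | s
    · have h0 : 4 * (0 + i + 1 : ℕ) * ((0 + i + 1 : ℕ) - 1 : ℝ) *
          polyInt (sqSubOne ^ j * rodrigues (0 + i + 1 - 2) (2 * i)) = 0 := by
        rcases i with _ | i
        · simp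
        · rw [rodrigues_eq_zero_of_lt (l := 0 + (i + 1) + 1 - 2) (by omega), mul_zero,
            polyInt_zero, mul_zero]
      rw [h0]
      simp only [ascPochhammer_zero, eval_one, zero_add, Nat.factorial_succ]
      have := i.factorial_ne_zero
      have := (2 * i).factorial_ne_zero
      push_cast
      field_simp
      ring
    · have e : s + 1 + i + 1 - 2 = s + i := by omega
      rw [e, ih]
      have h1 : (ascPochhammer ℝ (s + 1)).eval (j - (i + 1 : ℕ) + 1 : ℝ) =
          (j - i) * (ascPochhammer ℝ s).eval (j - i + 1 : ℝ) := by
        rw [ascPochhammer_succ_left, eval_mul, eval_X, eval_comp, eval_add, eval_X, eval_one]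
        have h2 : (j - (i + 1 : ℕ) + 1 : ℝ) = j - i := by push_cast; ring
        rw [h2]
      rw [h1, ascPochhammer_succ_eval]
      have f1 : 2 * (s + 1) + 2 * j + 2 = 2 * s + 2 * j + 2 + 1 + 1 := by ring
      have f2 : s + 1 + i = s + i + 1 := by ring
      have f3 : s + 1 + j + 1 = s + j + 1 + 1 := by ring
      rw [f1, f2, f3]
      simp only [Nat.factorial_succ]
      have := i.factorial_ne_zero
      have := s.factorial_ne_zero
      have := (2 * i).factorial_ne_zero
      have := (2 * s + 2 * j).factorial_ne_zero
      push_cast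
      field_simp
      ring

theorem polyInt_sqSubOne_pow_mul_rodrigues_odd (j k i : ℕ) :
    polyInt (sqSubOne ^ j * rodrigues k (2 * i + 1)) = 0 := by
  induction i generalizing k with
  | zero =>
    rcases k with _ | k
    · rw [rodrigues_eq_zero_of_lt (by omega), mul_zero, polyInt_zero]
    · have hd := polyInt_derivative (sqSubOne ^ (j + k + 1))
      rw [eval_pow, eval_pow, eval_sqSubOne_one, eval_sqSubOne_neg_one, sub_self,
        derivative_sqSubOne_pow, Nat.add_sub_cancel, mul_assoc, polyInt_C_mul] at hd
      have h0 := (mul_eq_zero.1 hd).resolve_left (by positivity)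
      rw [rodrigues_succ, mul_zero, rodrigues_zero, derivative_sqSubOne_pow, Nat.add_sub_cancel,
        mul_left_comm, mul_assoc, polyInt_C_mul, ← pow_add, h0, mul_zero]
  | succ i ih =>
    rw [mul_add, mul_one, add_right_comm, polyInt_sqSubOne_pow_mul_rodrigues_add_two,
      ih, ih, mul_zero, mul_zero, add_zero]

/-- Clebsch-Gordan integral at the top order, in terms of a 3-j symbol with zero orders. -/
theorem polyInt_sqSubOne_pow_mul_rodrigues_self {p k e : ℕ} (h : 2 * k = p + e) :
    polyInt (sqSubOne ^ k * rodrigues k e) = (-1) ^ (k + p) * 2 ^ (p + 2 * k + 1) *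
      (p.factorial : ℝ) ^ 2 * (k.factorial : ℝ) ^ 4 * e.factorial /
      (p + 2 * k + 1).factorial * racahSum p k k 0 0 := by
  rcases Nat.even_or_odd' p with ⟨s, rfl | rfl⟩
  · obtain ⟨i, rfl⟩ : ∃ i, k = s + i := ⟨k - s, by omega⟩
    obtain rfl : e = 2 * i := by omega
    rw [racahSum_two_mul_zero_zero, polyInt_sqSubOne_pow_mul_rodrigues_even]
    have h1 : ((s + i : ℕ) - i + 1 : ℝ) = ((s + 1 : ℕ) : ℝ) := by push_cast; ring
    have h2 : (s.factorial : ℝ) * (s + 1).ascFactorial s = (2 * s).factorial := by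
      rw [two_mul]
      exact_mod_cast Nat.factorial_mul_ascFactorial s s
    have h3 : s + (s + i) + 1 = 2 * s + i + 1 := by ring
    have h4 : 2 * s + 2 * (s + i) + 2 = 2 * s + 2 * (s + i) + 1 + 1 := by ring
    rw [h1, ascPochhammer_nat_eq_natCast_ascFactorial, h3, h4, Nat.factorial_succ (2 * s + i),
      Nat.factorial_succ (2 * s + 2 * (s + i) + 1), ← h2]
    have h5 : (4 : ℝ) ^ (2 * s + i + 1) = 2 * 2 ^ (2 * s + 2 * (s + i) + 1) := by
      rw [← pow_succ', show (4 : ℝ) = 2 ^ 2 by norm_num, ← pow_mul]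
      congr 1
      ring
    have h6 : (-1 : ℝ) ^ (s + i + 2 * s) * (-1) ^ s = (-1) ^ (s + i + s) := by
      rw [pow_add _ (s + i) (2 * s), pow_mul, neg_one_sq, one_pow, mul_one, pow_add _ (s + i) s]
    rw [h5, ← h6]
    have := s.factorial_ne_zero
    have := i.factorial_ne_zero
    have := (s + i).factorial_ne_zero
    have := (2 * s + 2 * (s + i) + 1).factorial_ne_zero
    have : ((s + 1).ascFactorial s : ℝ) ≠ 0 := by
      intro h0
      rw [h0, mul_zero] at h2
      exact Nat.factorial_ne_zero _ (by exact_mod_cast h2.symm)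
    push_cast
    field_simp
    ring
  · rw [racahSum_zero_zero_of_odd ⟨s, rfl⟩, mul_zero]
    obtain ⟨i, rfl⟩ : ∃ i, e = 2 * i + 1 := ⟨k - s - 1, by omega⟩
    exact polyInt_sqSubOne_pow_mul_rodrigues_odd _ _ _

theorem tripleInt_eq_racahSum_mul_racahSum {p k e : ℕ} (h : 2 * k = p + e) {m : ℕ} (hmp : m ≤ p)
    (hmk : m ≤ k) :
    tripleInt p k k (p + m) (k - m) k = 2 ^ (p + 2 * k + 1) *
      (p.factorial : ℝ) ^ 4 * (k.factorial : ℝ) ^ 5 * e.factorial / (p + 2 * k + 1).factorial *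
      ((p + m).factorial * (k - m).factorial) * racahSum p k k 0 0 *
      racahSum p k k m (-m) := by
  rw [tripleInt_eq_racahSum (d2 := p) (d3 := p) (e := e) (by omega) (by omega) (by omega)
    (by omega) (by omega), polyInt_sqSubOne_pow_mul_rodrigues_self h]
  have e1 : ((p + m : ℕ) : ℤ) - p = m := by push_cast; ring
  have e2 : ((k - m : ℕ) : ℤ) - k = -m := by omega
  have hs : (-1 : ℝ) ^ e * ((-1) ^ (k + p) * (-1) ^ k) = 1 := by
    rw [← pow_add, ← pow_add]
    exact Even.neg_one_pow ⟨2 * k, by omega⟩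
  rw [e1, e2]
  linear_combination 2 ^ (p + 2 * k + 1) *
      (p.factorial : ℝ) ^ 4 * (k.factorial : ℝ) ^ 5 * e.factorial / (p + 2 * k + 1).factorial *
      ((p + m).factorial * (k - m).factorial) * racahSum p k k 0 0 *
      racahSum p k k m (-m) * hs

theorem w3j_eq_racahSum {p k e m : ℕ} (h : 2 * k = p + e) (hmp : m ≤ p) (hmk : m ≤ k) :
    w3j p k k m (-m) 0 = (-1) ^ (p + k) *
      √((p.factorial : ℝ) ^ 2 * e.factorial * (k.factorial : ℝ) ^ 2 / (p + 2 * k + 1).factorial *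
        ((p - m).factorial * (p + m).factorial * (k - m).factorial * (k + m).factorial)) *
      racahSum p k k m (-m) := by
  rw [w3j, if_pos]
  · have e1 : (p : ℤ) + k - k = p := by ring
    have e2 : (p : ℤ) - k + k = p := by ring
    have e3 : -(p : ℤ) + k + k = e := by omega
    have e4 : (p : ℤ) - m = (p - m : ℕ) := by omega
    have e5 : (p : ℤ) + m = (p + m : ℕ) := by omega
    have e6 : (k : ℤ) - -m = (k + m : ℕ) := by omega
    have e7 : (k : ℤ) + -m = (k - m : ℕ) := by omega
    have e8 : (p : ℤ) + k + k + 1 = (p + 2 * k + 1 : ℕ) := by omega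
    congr 1
    · congr 1
      · rw [sub_zero, zpow_sub₀ (by norm_num), zpow_natCast, zpow_natCast, pow_add, div_eq_mul_inv,
          ← inv_pow]
        norm_num
      · rw [e1, e2, e3, e4, e5, e6, e7, e8, sub_zero, add_zero]
        simp only [fact'_natCast]
        congr 1
        ring
    · refine Finset.sum_congr rfl fun t _ => ?_
      simp only [racahTerm, rfact, div_eq_mul_inv, mul_inv]
  · refine ⟨by ring, ?_, ?_, ?_, by omega, ?_⟩ <;> rw [abs_le] <;> constructor <;> omega

theorem w3j_eq_zero_of_lt {p k : ℕ} (h : 2 * k < p) (m1 m2 m3 : ℤ) : w3j p k k m1 m2 m3 = 0 := by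
  rw [w3j, if_neg]
  rintro ⟨-, -, -, -, -, h6⟩
  rw [abs_le] at h6
  omega

/-- Gaunt's formula for the integral of three associated Legendre functions of orders
`m`, `-m`, `0`. -/
theorem tripleInt_eq_w3j {p k m : ℕ} (hmp : m ≤ p) (hmk : m ≤ k) :
    tripleInt p k k (p + m) (k - m) k =
      2 * (2 ^ (p + 2 * k) * p.factorial * (k.factorial : ℝ) ^ 2) *
      √((p + m).factorial * (k - m).factorial / ((p - m).factorial * (k + m).factorial)) *
      w3j p k k 0 0 0 * w3j p k k m (-m) 0 := by
  rcases lt_or_ge (2 * k) p with hlt | hle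
  · rw [w3j_eq_zero_of_lt hlt, mul_zero, zero_mul, tripleInt_eq_zero_of_lt] <;> omega
  · obtain ⟨e, he⟩ := Nat.exists_eq_add_of_le hle
    rw [tripleInt_eq_racahSum_mul_racahSum he hmp hmk, w3j_eq_racahSum he hmp hmk]
    have h0 := w3j_eq_racahSum he (Nat.zero_le p) (Nat.zero_le k)
    rw [Nat.cast_zero, neg_zero] at h0
    have hs : (-1 : ℝ) ^ (p + k) * (-1) ^ (p + k) = 1 := by
      rw [← mul_pow]; simp
    have hpos : ∀ n : ℕ, (0 : ℝ) < n.factorial := fun n => by exact_mod_cast n.factorial_pos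
    have h1 := hpos (p + m)
    have h2 := hpos (k - m)
    have h3 := hpos (p - m)
    have h4 := hpos (k + m)
    have h5 := hpos p
    have h6 := hpos k
    have h7 := hpos e
    have h8 := hpos (p + 2 * k + 1)
    have hsqrt : √((p + m).factorial * (k - m).factorial /
        ((p - m).factorial * (k + m).factorial) : ℝ) *
        (√((p.factorial : ℝ) ^ 2 * e.factorial * (k.factorial : ℝ) ^ 2 /
          (p + 2 * k + 1).factorial * ((p - 0).factorial * (p + 0).factorial * (k - 0).factorial *
            (k + 0).factorial)) *
        √((p.factorial : ℝ) ^ 2 * e.factorial * (k.factorial : ℝ) ^ 2 /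
          (p + 2 * k + 1).factorial *
          ((p - m).factorial * (p + m).factorial * (k - m).factorial * (k + m).factorial))) =
        (p.factorial : ℝ) ^ 3 * (k.factorial : ℝ) ^ 3 * e.factorial / (p + 2 * k + 1).factorial *
          ((p + m).factorial * (k - m).factorial) := by
      rw [← Real.sqrt_mul (by positivity), ← Real.sqrt_mul (by positivity),
        Real.sqrt_eq_iff_mul_self_eq (by positivity) (by positivity)]
      simp only [Nat.sub_zero, Nat.add_zero]
      field_simp
    rw [h0]
    linear_combination (-(2 * (2 ^ (p + 2 * k) * p.factorial * (k.factorial : ℝ) ^ 2) *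
      racahSum p k k 0 0 * racahSum p k k m (-m))) *
      (hsqrt + (√((p + m).factorial * (k - m).factorial /
        ((p - m).factorial * (k + m).factorial) : ℝ) *
        (√((p.factorial : ℝ) ^ 2 * e.factorial * (k.factorial : ℝ) ^ 2 /
          (p + 2 * k + 1).factorial * ((p - 0).factorial * (p + 0).factorial * (k - 0).factorial *
            (k + 0).factorial)) *
        √((p.factorial : ℝ) ^ 2 * e.factorial * (k.factorial : ℝ) ^ 2 /
          (p + 2 * k + 1).factorial *
          ((p - m).factorial * (p + m).factorial * (k - m).factorial * (k + m).factorial)))) * hs)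

theorem iteratedDeriv_sq_sub_one_pow (l n : ℕ) :
    iteratedDeriv n (fun y : ℝ => (y ^ 2 - 1) ^ l) = fun x => (rodrigues l n).eval x := by
  induction n with
  | zero => ext x; simp [rodrigues_zero, sqSubOne]
  | succ n ih =>
    ext x
    rw [iteratedDeriv_succ, ih, Polynomial.deriv, rodrigues_succ]

theorem assocLegendre_natCast (l m : ℕ) (x : ℝ) :
    assocLegendre l m x = (-1) ^ m / (2 ^ l * l.factorial) * (1 - x ^ 2) ^ ((m : ℝ) / 2) *
      (rodrigues l (l + m)).eval x := by
  have h : ((m : ℤ) + l).toNat = l + m := by omega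
  rw [assocLegendre, h, iteratedDeriv_sq_sub_one_pow, zpow_natCast, Int.cast_natCast]

theorem assocLegendre_neg_natCast {l m : ℕ} (hm : m ≤ l) {x : ℝ} (hx : 0 < 1 - x ^ 2) :
    assocLegendre l (-m) x = (-1) ^ m / (2 ^ l * l.factorial) *
      ((1 - x ^ 2) ^ ((m : ℝ) / 2))⁻¹ * (rodrigues l (l - m)).eval x := by
  have h : (-(m : ℤ) + l).toNat = l - m := by omega
  rw [assocLegendre, h, iteratedDeriv_sq_sub_one_pow, zpow_neg, zpow_natCast, Int.cast_neg,
    Int.cast_natCast, neg_div, Real.rpow_neg hx.le, ← inv_pow]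
  norm_num

end Polynomial

/-- Normalization constant of the spherical harmonics. -/
noncomputable def sphNorm (l : ℕ) (m : ℤ) : ℝ :=
  √((2 * l + 1) / (4 * Real.pi) * (fact' ((l : ℤ) - m) / fact' ((l : ℤ) + m)))

theorem sphNorm_natCast {l m : ℕ} (hm : m ≤ l) : sphNorm l m =
    √((2 * l + 1) / (4 * Real.pi) * ((l - m).factorial / (l + m).factorial)) := by
  have h1 : (l : ℤ) - m = (l - m : ℕ) := by omega
  have h2 : (l : ℤ) + m = (l + m : ℕ) := by omega
  rw [sphNorm, h1, h2, fact'_natCast, fact'_natCast]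

theorem sphNorm_neg_natCast {l m : ℕ} (hm : m ≤ l) : sphNorm l (-m) =
    √((2 * l + 1) / (4 * Real.pi) * ((l + m).factorial / (l - m).factorial)) := by
  have h1 : (l : ℤ) - -m = (l + m : ℕ) := by omega
  have h2 : (l : ℤ) + -m = (l - m : ℕ) := by omega
  rw [sphNorm, h1, h2, fact'_natCast, fact'_natCast]

theorem sphNorm_neg_mul_factorial {l m : ℕ} (hm : m ≤ l) :
    sphNorm l (-m) * (l - m).factorial = sphNorm l m * (l + m).factorial := by
  have h1 : (0 : ℝ) < (l - m).factorial := by exact_mod_cast Nat.factorial_pos _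
  have h2 : (0 : ℝ) < (l + m).factorial := by exact_mod_cast Nat.factorial_pos _
  rw [sphNorm_natCast hm, sphNorm_neg_natCast hm, ← Real.sqrt_sq h1.le, ← Real.sqrt_sq h2.le,
    ← Real.sqrt_mul (by positivity), ← Real.sqrt_mul (by positivity), Real.sqrt_sq h1.le,
    Real.sqrt_sq h2.le]
  congr 1
  field_simp

theorem sphNorm_neg_mul_assocLegendre_neg {l m : ℕ} (hm : m ≤ l) {x : ℝ} (hx : 0 < 1 - x ^ 2) :
    sphNorm l (-m) * assocLegendre l (-m) x = (-1) ^ m * (sphNorm l m * assocLegendre l m x) := by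
  have hN := sphNorm_neg_mul_factorial hm
  have hR := congrArg (Polynomial.eval x) (rodrigues_reflect hm)
  rw [Polynomial.eval_mul, Polynomial.eval_mul, Polynomial.eval_mul, Polynomial.eval_pow,
    Polynomial.eval_C, Polynomial.eval_C] at hR
  have hW : sqSubOne.eval x ^ m = (-1) ^ m * ((1 - x ^ 2) ^ ((m : ℝ) / 2)) ^ 2 := by
    rw [← Real.rpow_natCast (_ ^ ((m : ℝ) / 2)), ← Real.rpow_mul hx.le, Nat.cast_ofNat,
      div_mul_cancel₀ _ two_ne_zero, Real.rpow_natCast, ← mul_pow]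
    congr 1
    simp [sqSubOne]
  rw [hW] at hR
  rw [assocLegendre_natCast, assocLegendre_neg_natCast hm hx]
  have hu : 0 < (1 - x ^ 2) ^ ((m : ℝ) / 2) := Real.rpow_pos_of_pos hx _
  generalize (1 - x ^ 2) ^ ((m : ℝ) / 2) = u at *
  have h1 : ((l - m).factorial : ℝ) ≠ 0 := by exact_mod_cast Nat.factorial_ne_zero _
  have h2 : ((l + m).factorial : ℝ) ≠ 0 := by exact_mod_cast Nat.factorial_ne_zero _
  have h3 : (l.factorial : ℝ) ≠ 0 := by exact_mod_cast Nat.factorial_ne_zero _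
  rw [← eq_div_iff h1] at hN
  rw [mul_comm, ← eq_div_iff h2] at hR
  rw [hN, hR]
  field_simp

/-- Polar part of the real spherical harmonic of degree `l` and order `m > 0`. -/
noncomputable def polarPart (l m : ℕ) (θ : ℝ) : ℝ :=
  (sphNorm l (-m) * assocLegendre l (-m) (Real.cos θ) +
    (-1) ^ m * (sphNorm l m * assocLegendre l m (Real.cos θ))) / √2

theorem polarPart_eq {l m : ℕ} (hm : m ≤ l) {θ : ℝ} (hθ : Real.sin θ ≠ 0) :
    polarPart l m θ = √2 * (-1) ^ m * (sphNorm l m * assocLegendre l m (Real.cos θ)) := by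
  have hx : 0 < 1 - Real.cos θ ^ 2 := by rw [← Real.sin_sq]; positivity
  have h2 : √2 * √2 = 2 := Real.mul_self_sqrt (by norm_num)
  rw [polarPart, sphNorm_neg_mul_assocLegendre_neg hm hx, div_eq_iff (by positivity)]
  linear_combination -(-1) ^ m * (sphNorm l m * assocLegendre l m (Real.cos θ)) * h2

theorem polarPart_eq_neg {l m : ℕ} (hm : m ≤ l) {θ : ℝ} (hθ : Real.sin θ ≠ 0) :
    polarPart l m θ = √2 * (sphNorm l (-m) * assocLegendre l (-m) (Real.cos θ)) := by
  have hx : 0 < 1 - Real.cos θ ^ 2 := by rw [← Real.sin_sq]; positivity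
  rw [polarPart_eq hm hθ, sphNorm_neg_mul_assocLegendre_neg hm hx, mul_assoc]

theorem Ysph_eq (l : ℕ) (m : ℤ) (θ φ : ℝ) : Ysph l m θ φ =
    ((sphNorm l m * assocLegendre l m (Real.cos θ) : ℝ) : ℂ) *
      Complex.exp ((m * φ : ℝ) * Complex.I) := by
  rw [Ysph, sphNorm]
  congr 2
  push_cast
  ring

theorem Ysph_re (l : ℕ) (m : ℤ) (θ φ : ℝ) : (Ysph l m θ φ).re =
    sphNorm l m * assocLegendre l m (Real.cos θ) * Real.cos (m * φ) := by
  rw [Ysph_eq, Complex.re_ofReal_mul, Complex.exp_ofReal_mul_I_re]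

theorem Yre_zero (l : ℕ) (θ φ : ℝ) :
    Yre l 0 θ φ = sphNorm l 0 * assocLegendre l 0 (Real.cos θ) := by
  simp [Yre, Ysph_re]

theorem Yre_natCast (l : ℕ) {m : ℕ} (hm : 0 < m) (θ φ : ℝ) :
    Yre l m θ φ = polarPart l m θ * Real.cos (m * φ) := by
  have h1 : (1 / (√2 : ℂ)) = ((1 / √2 : ℝ) : ℂ) := by push_cast; rfl
  have h2 : (-1 : ℂ) ^ (m : ℤ) = (((-1) ^ m : ℝ) : ℂ) := by push_cast; rw [zpow_natCast]
  rw [Yre, if_neg (by omega), if_neg (by omega), h1, h2, Complex.re_ofReal_mul, Complex.add_re,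
    Complex.re_ofReal_mul, Ysph_re, Ysph_re, polarPart, Int.cast_neg, Int.cast_natCast, neg_mul,
    Real.cos_neg]
  ring

theorem integral_cos_int_mul {n : ℤ} (hn : n ≠ 0) :
    ∫ φ in (0 : ℝ)..(2 * Real.pi), Real.cos (n * φ) = 0 := by
  have hn' : (n : ℝ) ≠ 0 := by exact_mod_cast hn
  have h : (n : ℝ) * (2 * Real.pi) = ((2 * n : ℤ) : ℝ) * Real.pi := by push_cast; ring
  rw [intervalIntegral.integral_comp_mul_left (fun x => Real.cos x) hn', integral_cos, h,
    Real.sin_int_mul_pi]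
  simp

theorem integral_cos_mul_cos_nat {q m : ℕ} (hm : 0 < m) :
    ∫ φ in (0 : ℝ)..(2 * Real.pi), Real.cos (q * φ) * Real.cos (m * φ) =
      if q = m then Real.pi else 0 := by
  have h : ∀ φ : ℝ, Real.cos (q * φ) * Real.cos (m * φ) =
      (Real.cos (((q - m : ℤ) : ℝ) * φ) + Real.cos (((q + m : ℤ) : ℝ) * φ)) / 2 := by
    intro φ
    push_cast
    rw [sub_mul, add_mul, Real.cos_sub, Real.cos_add]
    ring
  simp_rw [h]
  rw [intervalIntegral.integral_div, intervalIntegral.integral_add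
    (by apply Continuous.intervalIntegrable; fun_prop)
    (by apply Continuous.intervalIntegrable; fun_prop),
    integral_cos_int_mul (n := q + m) (by omega)]
  split_ifs with hqm
  · subst hqm
    simp
  · rw [integral_cos_int_mul (by omega)]
    simp

theorem integral_eval_cos_mul_sin (f : Polynomial ℝ) :
    ∫ θ in (0 : ℝ)..Real.pi, f.eval (Real.cos θ) * Real.sin θ = polyInt f := by
  have h := intervalIntegral.integral_comp_mul_deriv (a := 0) (b := Real.pi) (f := Real.cos)
    (f' := fun x => -Real.sin x) (g := fun x => f.eval x)
    (fun x _ => Real.hasDerivAt_cos x) (by fun_prop) f.continuous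
  simp only [Function.comp_def, mul_neg, intervalIntegral.integral_neg, Real.cos_zero,
    Real.cos_pi] at h
  rw [polyInt, intervalIntegral.integral_symm 1 (-1), ← h, neg_neg]

theorem integral_polarPart_mul_polarPart {p k m : ℕ} (hmp : m ≤ p) (hmk : m ≤ k) :
    ∫ θ in (0 : ℝ)..Real.pi, polarPart p m θ * polarPart k m θ *
      (sphNorm k 0 * assocLegendre k 0 (Real.cos θ)) * Real.sin θ =
    2 * (-1) ^ m * (sphNorm p m * sphNorm k (-m) * sphNorm k 0) /
      (2 ^ (p + 2 * k) * p.factorial * (k.factorial : ℝ) ^ 2) *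
      tripleInt p k k (p + m) (k - m) k := by
  rw [tripleInt, ← integral_eval_cos_mul_sin, ← intervalIntegral.integral_const_mul]
  refine intervalIntegral.integral_congr fun θ _ => ?_
  by_cases hθ : Real.sin θ = 0
  · simp [hθ]
  have hx : 0 < 1 - Real.cos θ ^ 2 := by rw [← Real.sin_sq]; positivity
  have hu := Real.rpow_pos_of_pos hx ((m : ℝ) / 2)
  have h0 := assocLegendre_natCast k 0 (Real.cos θ)
  rw [Nat.cast_zero, Nat.cast_zero, zero_div, Real.rpow_zero, pow_zero, mul_one, add_zero] at h0
  rw [polarPart_eq hmp hθ, polarPart_eq_neg hmk hθ, assocLegendre_natCast,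
    assocLegendre_neg_natCast hmk hx, h0, Polynomial.eval_mul, Polynomial.eval_mul]
  have h2 : √2 * √2 = 2 := Real.mul_self_sqrt (by norm_num)
  have hs : (-1 : ℝ) ^ m * (-1) ^ m = 1 := by rw [← mul_pow]; simp
  have hp : (p.factorial : ℝ) ≠ 0 := by exact_mod_cast Nat.factorial_ne_zero _
  have hk : (k.factorial : ℝ) ≠ 0 := by exact_mod_cast Nat.factorial_ne_zero _
  generalize (1 - Real.cos θ ^ 2) ^ ((m : ℝ) / 2) = u at *
  generalize (-1 : ℝ) ^ m = σ at *
  generalize √2 = r at *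
  have hσ : σ ^ 2 = 1 := by rw [sq, hs]
  have hr : r ^ 2 = 2 := by rw [sq, h2]
  rw [pow_add, two_mul k, pow_add]
  field_simp
  rw [show σ ^ 3 = σ ^ 2 * σ by ring, hσ, hr]
  ring

theorem sphNorm_mul_mul {p k m : ℕ} (hmp : m ≤ p) (hmk : m ≤ k) :
    4 * Real.pi * (sphNorm p m * sphNorm k (-m) * sphNorm k 0) *
      √((p + m).factorial * (k - m).factorial / ((p - m).factorial * (k + m).factorial)) =
    (2 * k + 1) * √(2 * p + 1) / √(4 * Real.pi) := by
  have h0 := sphNorm_natCast (Nat.zero_le k)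
  have hpos : ∀ n : ℕ, (0 : ℝ) < n.factorial := fun n => by exact_mod_cast n.factorial_pos
  have h1 := hpos (p + m)
  have h2 := hpos (k - m)
  have h3 := hpos (p - m)
  have h4 := hpos (k + m)
  have h5 := hpos k
  have h6 := Real.pi_pos
  rw [Nat.cast_zero, Nat.sub_zero, Nat.add_zero, div_self h5.ne', mul_one] at h0
  have h8 : (2 * k + 1) * √(2 * p + 1) / √(4 * Real.pi) =
      (2 * k + 1) * √((2 * p + 1) / (4 * Real.pi)) := by
    rw [Real.sqrt_div (by positivity), mul_div_assoc]
  rw [h0, sphNorm_natCast hmp, sphNorm_neg_natCast hmk, mul_assoc,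
    ← Real.sqrt_mul (by positivity), ← Real.sqrt_mul (by positivity),
    ← Real.sqrt_mul (by positivity), h8]
  have h7 : (2 * p + 1 : ℝ) / (4 * Real.pi) * ((p - m).factorial / (p + m).factorial) *
      ((2 * k + 1) / (4 * Real.pi) * ((k + m).factorial / (k - m).factorial)) *
      ((2 * k + 1) / (4 * Real.pi)) *
      ((p + m).factorial * (k - m).factorial / ((p - m).factorial * (k + m).factorial)) =
      ((2 * k + 1) / (4 * Real.pi)) ^ 2 * ((2 * p + 1) / (4 * Real.pi)) := by
    field_simp
  rw [h7, Real.sqrt_mul (by positivity), Real.sqrt_sq (by positivity)]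
  field_simp

/-- For `q > 0`, `m > 0`, `n = 0`:
`W^{p,k}_{q,m,0} = δ_{q,m} C_{p,k} (−1)^q (p k k; 0 0 0)(p k k; m −m 0)`, where
`C_{p,k} = (2k+1)√(2p+1)/√(4π)`. -/
theorem tripleProduct_n_zero (p k : ℕ) (q m : ℤ)
    (hq : 0 < q) (hq' : q ≤ (p : ℤ)) (hm : 0 < m) (hm' : m ≤ (k : ℤ)) :
    sphInt (fun θ φ => Yre p q θ φ * Yre k m θ φ * Yre k 0 θ φ) =
      (if q = m then 1 else 0) *
        ((2 * (k : ℝ) + 1) * Real.sqrt (2 * p + 1) / Real.sqrt (4 * Real.pi)) *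
        (-1 : ℝ) ^ q * w3j p k k 0 0 0 * w3j p k k m (-m) 0 := by
  lift q to ℕ using hq.le
  lift m to ℕ using hm.le
  rw [Nat.cast_pos] at hq hm
  rw [Nat.cast_le] at hq' hm'
  have hinner : ∀ θ : ℝ, ∫ φ in (0 : ℝ)..(2 * Real.pi),
      Yre p q θ φ * Yre k m θ φ * Yre k 0 θ φ * Real.sin θ =
      (if q = m then Real.pi else 0) * (polarPart p q θ * polarPart k m θ *
        (sphNorm k 0 * assocLegendre k 0 (Real.cos θ)) * Real.sin θ) := by
    intro θ
    rw [← integral_cos_mul_cos_nat hm, ← intervalIntegral.integral_mul_const]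
    refine intervalIntegral.integral_congr fun φ _ => ?_
    rw [Yre_natCast p hq, Yre_natCast k hm, Yre_zero]
    ring
  rw [sphInt]
  simp_rw [hinner, Nat.cast_inj]
  rw [intervalIntegral.integral_const_mul]
  by_cases hqm : q = m
  · subst hqm
    have hC := sphNorm_mul_mul hq' hm'
    have hp : (p.factorial : ℝ) ≠ 0 := by exact_mod_cast Nat.factorial_ne_zero _
    have hk : (k.factorial : ℝ) ≠ 0 := by exact_mod_cast Nat.factorial_ne_zero _
    rw [if_pos rfl, if_pos rfl, integral_polarPart_mul_polarPart hq' hm',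
      tripleInt_eq_w3j hq' hm', ← hC, zpow_natCast]
    field_simp
    ring
  · simp [hqm]
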